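/- Let n ≥ 2 and let g_j, s_j ∈ ℝⁿ, α_j ∈ ℝ and ρ_j ∈ ℝ \ {0} be sequences such that for all j: s_jᵀ g_j < 0; s_jᵀ g_{j+i} = 0 for 1 ≤ i < n; g_{j+n} = ρ_j (g_{j+1} − g_j); and α_{j+n} = s_{j+n}ᵀ g_{j+n} / (s_jᵀ g_j ρ_j²). Define B_k = −Σ_{i=0}^{n−1} (α_{k+i}/(g_{k+i}ᵀ s_{k+i})) g_{k+i} g_{k+i}ᵀ. Then for every k, B_{k+1} = B_k + (α_k/(s_kᵀ g_k)) g_k g_kᵀ − (1/(s_kᵀ g_k)) (g_{k+1} − g_k)(g_{k+1} − g_k)ᵀ; that is, the matrices B_k satisfy the BFGS update formula with exact line searches. -/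

import Mathlib

/-!
With `F j = (α j / g jᵀ s j) g j g jᵀ`, the matrix `B k` is minus the sum of `F` over the window
`k, …, k + n - 1`, so `B (k + 1) = B k + F k - F (k + n)`. The recurrences for `g (k + n)` and
`α (k + n)` are such that the factors `ρ k ^ 2` cancel in `F (k + n)`, leaving
`(1 / s kᵀ g k) (g (k + 1) - g k) (g (k + 1) - g k)ᵀ`.
-/

open Matrix Finset

/-- the matrices `B_k` built from the gradients, steps and step sizes
satisfy the BFGS update formula with exact line searches. -/
theorem bfgs_update_stmt13 (n : ℕ) (hn : 2 ≤ n)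
    (g s : ℕ → Fin n → ℝ) (α ρ : ℕ → ℝ) (hρ : ∀ j, ρ j ≠ 0)
    (hdesc : ∀ j, s j ⬝ᵥ g j < 0)
    (horth : ∀ j i, 1 ≤ i → i < n → s j ⬝ᵥ g (j + i) = 0)
    (hgrec : ∀ j, g (j + n) = ρ j • (g (j + 1) - g j))
    (hα : ∀ j, α (j + n) = (s (j + n) ⬝ᵥ g (j + n)) / ((s j ⬝ᵥ g j) * ρ j ^ 2))
    (B : ℕ → Matrix (Fin n) (Fin n) ℝ)
    (hB : ∀ k, B k = -∑ i ∈ Finset.range n,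
      (α (k + i) / (g (k + i) ⬝ᵥ s (k + i))) • Matrix.vecMulVec (g (k + i)) (g (k + i))) :
    ∀ k, B (k + 1) = B k + (α k / (s k ⬝ᵥ g k)) • Matrix.vecMulVec (g k) (g k) -
      (s k ⬝ᵥ g k)⁻¹ • Matrix.vecMulVec (g (k + 1) - g k) (g (k + 1) - g k) := by
  intro k
  set F : ℕ → Matrix (Fin n) (Fin n) ℝ :=
    fun j => (α j / (g j ⬝ᵥ s j)) • Matrix.vecMulVec (g j) (g j) with hF
  -- The window of indices moves by one: `F k` leaves the sum and `F (k + n)` enters it.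
  have hshift : B (k + 1) = B k + F k - F (k + n) := by
    have h1 : ∑ i ∈ Finset.range n, F (k + 1 + i) + F k
        = ∑ i ∈ Finset.range n, F (k + i) + F (k + n) := by
      rw [← Finset.sum_range_succ (fun i => F (k + i)), Finset.sum_range_succ']
      simp only [add_zero, add_assoc, add_comm 1]
    have h2 : B (k + 1) = -∑ i ∈ Finset.range n, F (k + 1 + i) := hB (k + 1)
    have h3 : B k = -∑ i ∈ Finset.range n, F (k + i) := hB k
    rw [h2, h3, eq_sub_of_add_eq h1]
    abel
  have hk : s k ⬝ᵥ g k ≠ 0 := (hdesc k).ne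
  have hkn : s (k + n) ⬝ᵥ g (k + n) ≠ 0 := (hdesc (k + n)).ne
  have hcoef : α (k + n) / (g (k + n) ⬝ᵥ s (k + n)) = (s k ⬝ᵥ g k)⁻¹ * (ρ k ^ 2)⁻¹ := by
    rw [hα, dotProduct_comm (g (k + n))]
    have := hρ k
    field_simp
  have hentering : F (k + n)
      = (s k ⬝ᵥ g k)⁻¹ • Matrix.vecMulVec (g (k + 1) - g k) (g (k + 1) - g k) := by
    simp only [hF]
    rw [hcoef, hgrec, Matrix.smul_vecMulVec, Matrix.vecMulVec_smul, smul_smul, smul_smul]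
    congr 1
    have := hρ k
    field_simp
  rw [hshift, hentering]
  simp only [hF, dotProduct_comm (g k) (s k)]
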